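/- Let n ≥ 1 be an integer and set c = (1/n)·e^{1 + 1/n}. Then for every real t > 0 one has (c·t)^{1/(1+t)} ≤ e^{1/n}, and equality holds for t = n. -/

import Mathlib

/-!
The elementary inequality `e * x ≤ e ^ x`, an equality at `x = 1`, applied to `x = t / n` and
multiplied by `e ^ (1 / n)`, reads `c * t ≤ e ^ ((1 + t) / n)`; take the `(1 + t)`-th root.
-/

lemma mul_exp_one_add_mul_le_exp (b t : ℝ) :
    b * Real.exp (1 + b) * t ≤ Real.exp (b * (1 + t)) :=
  calc b * Real.exp (1 + b) * t = Real.exp 1 * (b * t) * Real.exp b := by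
        rw [Real.exp_add]; ring
    _ ≤ Real.exp (b * t) * Real.exp b := by gcongr; exact Real.exp_one_mul_le_exp
    _ = Real.exp (b * (1 + t)) := by rw [← Real.exp_add]; ring_nf

lemma mul_exp_one_add_mul_eq_exp_of_mul_eq_one {b t : ℝ} (hbt : b * t = 1) :
    b * Real.exp (1 + b) * t = Real.exp (b * (1 + t)) :=
  calc b * Real.exp (1 + b) * t = b * t * Real.exp (1 + b) := by ring
    _ = Real.exp (b * t + b) := by rw [hbt, one_mul]
    _ = Real.exp (b * (1 + t)) := by ring_nf

lemma exp_mul_rpow_one_div (b : ℝ) {s : ℝ} (hs : s ≠ 0) :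
    Real.exp (b * s) ^ (1 / s) = Real.exp b := by
  rw [← Real.exp_mul, mul_assoc, mul_one_div_cancel hs, mul_one]

theorem stmt_8_general {a c : ℝ} (ha : a ≠ 0) (hc : c = (1 / a) * Real.exp (1 + 1 / a)) :
    (∀ t : ℝ, -1 < t → 0 ≤ c * t → (c * t) ^ (1 / (1 + t)) ≤ Real.exp (1 / a)) ∧
      (a ≠ -1 → (c * a) ^ (1 / (1 + a)) = Real.exp (1 / a)) := by
  subst hc
  constructor
  · intro t ht hbase
    have hs : 0 < 1 + t := by linarith
    calc (1 / a * Real.exp (1 + 1 / a) * t) ^ (1 / (1 + t))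
        ≤ Real.exp (1 / a * (1 + t)) ^ (1 / (1 + t)) := by
          gcongr
          exact mul_exp_one_add_mul_le_exp (1 / a) t
      _ = Real.exp (1 / a) := exp_mul_rpow_one_div (1 / a) hs.ne'
  · intro ha'
    have hs : 1 + a ≠ 0 := fun h => ha' (by linarith)
    rw [mul_exp_one_add_mul_eq_exp_of_mul_eq_one (one_div_mul_cancel ha),
      exp_mul_rpow_one_div (1 / a) hs]

/-- For an integer `n ≥ 1` and `c = (1/n)·e^{1+1/n}`, one has
`(c·t)^{1/(1+t)} ≤ e^{1/n}` for every real `t > 0`, with equality at `t = n`. -/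
theorem stmt_8 (n : ℕ) (hn : 1 ≤ n) (c : ℝ)
    (hc : c = (1 / (n : ℝ)) * Real.exp (1 + 1 / (n : ℝ))) :
    (∀ t : ℝ, 0 < t → (c * t) ^ (1 / (1 + t)) ≤ Real.exp (1 / (n : ℝ))) ∧
      (c * (n : ℝ)) ^ (1 / (1 + (n : ℝ))) = Real.exp (1 / (n : ℝ)) := by
  obtain ⟨hle, heq⟩ := stmt_8_general (Nat.cast_ne_zero.mpr (by omega)) hc
  exact ⟨fun t ht => hle t (by linarith) (by rw [hc]; positivity), heq (by linarith)⟩
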